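/- arXiv:1710.05317 — 2 statements merged into one kernel-verified Lean document; each statement's English description precedes it below -/
import Mathlib

section
/- Let G₁ and G₂ be a pair of ordered cores and suppose there is an order-preserving isomorphism between G₁ and G₂. Then every order-preserving homomorphism f : G₁ → G₂ is an order-preserving isomorphism. -/
/-!
An ordered core has no order-preserving endomorphism `e` other than the identity: by minimality
the image of `e` has as many vertices as the core, so `e` is injective on vertices, hence strictly
monotone, and a strictly monotone self-map of a finite linear order is the identity
(`IsOrderedCore.eq_self`). If `g : G₁ → G₂` is an order-preserving isomorphism, then so is `g⁻¹`
(`OPIso.opHom_invFunOn`), and `g⁻¹ ∘ f` is such an endomorphism of `G₁`. Thus `f` agrees with `g`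
on the vertices of `G₁`, which makes `f` an isomorphism.
-/

/-- A graph whose vertices are natural numbers (hence linearly ordered), given by a
finite vertex set and an adjacency relation. -/
structure OrderedGraph where
  verts : Finset ℕ
  Adj : ℕ → ℕ → Prop

/-- Well-formedness: the adjacency relation is symmetric, irreflexive, and supported
on the vertex set. -/
def OrderedGraph.IsGraph (G : OrderedGraph) : Prop :=
  (∀ x y, G.Adj x y → G.Adj y x) ∧ (∀ x, ¬ G.Adj x x) ∧
  (∀ x y, G.Adj x y → x ∈ G.verts ∧ y ∈ G.verts)

/-- `C` is a subgraph of `G` (inheriting its vertex labels). -/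
def IsSubgraph (C G : OrderedGraph) : Prop :=
  C.verts ⊆ G.verts ∧ ∀ x y, C.Adj x y → G.Adj x y

/-- `f` is an order-preserving homomorphism from `G` to `G'`. -/
def OPHom (G G' : OrderedGraph) (f : ℕ → ℕ) : Prop :=
  (∀ x ∈ G.verts, f x ∈ G'.verts) ∧
  (∀ x ∈ G.verts, ∀ y ∈ G.verts, x ≤ y → f x ≤ f y) ∧
  (∀ x y, G.Adj x y → G'.Adj (f x) (f y))

/-- `f` is an order-preserving isomorphism from `G` to `G'`. -/
def OPIso (G G' : OrderedGraph) (f : ℕ → ℕ) : Prop :=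
  OPHom G G' f ∧ Set.BijOn f ↑G.verts ↑G'.verts ∧
  ∀ x ∈ G.verts, ∀ y ∈ G.verts, G'.Adj (f x) (f y) → G.Adj x y

/-- `C` is an ordered core of `G`: a subgraph of `G`, admitting an order-preserving
homomorphism from `G`, of minimum possible number of vertices. -/
def IsOrderedCoreOf (C G : OrderedGraph) : Prop :=
  IsSubgraph C G ∧ (∃ f, OPHom G C f) ∧
  ∀ C' : OrderedGraph, IsSubgraph C' G → (∃ f, OPHom G C' f) →
    C.verts.card ≤ C'.verts.card

/-- `G` is an ordered core if it is the ordered core of itself. -/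
def IsOrderedCore (G : OrderedGraph) : Prop := IsOrderedCoreOf G G

theorem OPHom.comp {G G' G'' : OrderedGraph} {f f' : ℕ → ℕ} (hf' : OPHom G' G'' f')
    (hf : OPHom G G' f) : OPHom G G'' (f' ∘ f) :=
  ⟨fun x hx => hf'.1 _ (hf.1 x hx),
    fun x hx y hy hxy => hf'.2.1 _ (hf.1 x hx) _ (hf.1 y hy) (hf.2.1 x hx y hy hxy),
    fun x y h => hf'.2.2 _ _ (hf.2.2 x y h)⟩

theorem OPIso.opHom_invFunOn {G G' : OrderedGraph} (hG' : G'.IsGraph) {g : ℕ → ℕ}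
    (hg : OPIso G G' g) : OPHom G' G (Function.invFunOn g ↑G.verts) := by
  obtain ⟨hhom, hbij, hadj⟩ := hg
  have hmem : ∀ y ∈ G'.verts, Function.invFunOn g ↑G.verts y ∈ G.verts :=
    fun y hy => Function.invFunOn_mem (hbij.surjOn hy)
  have hinv : ∀ y ∈ G'.verts, g (Function.invFunOn g ↑G.verts y) = y :=
    fun y hy => Function.invFunOn_eq (hbij.surjOn hy)
  refine ⟨hmem, fun x hx y hy hxy => ?_, fun x y h => ?_⟩
  · by_contra! hlt
    have hle := hhom.2.1 _ (hmem y hy) _ (hmem x hx) hlt.le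
    rw [hinv x hx, hinv y hy] at hle
    rw [le_antisymm hxy hle] at hlt
    exact lt_irrefl _ hlt
  · obtain ⟨hx, hy⟩ := hG'.2.2 x y h
    apply hadj _ (hmem x hx) _ (hmem y hy)
    rwa [hinv x hx, hinv y hy]

/-- The image of an endomorphism is a subgraph receiving a homomorphism from the core. -/
theorem IsOrderedCore.injOn {G : OrderedGraph} (hG : G.IsGraph) (hc : IsOrderedCore G)
    {e : ℕ → ℕ} (he : OPHom G G e) : Set.InjOn e ↑G.verts := by
  have hcard : G.verts.card ≤ (G.verts.image e).card :=
    hc.2.2 ⟨G.verts.image e, fun x y => G.Adj x y ∧ x ∈ G.verts.image e ∧ y ∈ G.verts.image e⟩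
      ⟨Finset.image_subset_iff.2 he.1, fun _ _ h => h.1⟩
      ⟨e, fun _ hx => Finset.mem_image_of_mem e hx, he.2.1, fun x y h =>
        ⟨he.2.2 x y h, Finset.mem_image_of_mem e (hG.2.2 x y h).1,
          Finset.mem_image_of_mem e (hG.2.2 x y h).2⟩⟩
  exact Finset.card_image_iff.1 (le_antisymm Finset.card_image_le hcard)

theorem IsOrderedCore.eq_self {G : OrderedGraph} (hG : G.IsGraph) (hc : IsOrderedCore G)
    {e : ℕ → ℕ} (he : OPHom G G e) {x : ℕ} (hx : x ∈ G.verts) : e x = x := by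
  have hinj := hc.injOn hG he
  let e' : G.verts → G.verts := fun v => ⟨e v, he.1 v v.2⟩
  have hmono : StrictMono e' := fun a b hab =>
    lt_of_le_of_ne (he.2.1 a a.2 b b.2 hab.le) fun h =>
      hab.ne (Subtype.ext (hinj a.2 b.2 (congrArg Subtype.val h)))
  exact le_antisymm (hmono.apply_le (x := ⟨x, hx⟩)) (hmono.le_apply (x := ⟨x, hx⟩))

/-- between order-preservingly isomorphic ordered cores, every
order-preserving homomorphism is an order-preserving isomorphism. -/
theorem stmt12 (G₁ G₂ : OrderedGraph) (h₁ : G₁.IsGraph) (h₂ : G₂.IsGraph)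
    (hc₁ : IsOrderedCore G₁) (hc₂ : IsOrderedCore G₂)
    (hiso : ∃ g : ℕ → ℕ, OPIso G₁ G₂ g)
    (f : ℕ → ℕ) (hf : OPHom G₁ G₂ f) :
    OPIso G₁ G₂ f := by
  obtain ⟨g, hg⟩ := hiso
  have hfg : ∀ x ∈ G₁.verts, g x = f x := fun x hx => by
    have hid : Function.invFunOn g ↑G₁.verts (f x) = x :=
      hc₁.eq_self h₁ ((hg.opHom_invFunOn h₂).comp hf) hx
    have hinv := Function.invFunOn_eq (hg.2.1.surjOn (hf.1 x hx))
    rwa [hid] at hinv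
  refine ⟨hf, hg.2.1.congr hfg, fun x hx y hy h => hg.2.2 x hx y hy ?_⟩
  rwa [hfg x hx, hfg y hy]
end

section
/- Let H be an oriented graph on h vertices that is not 2-colorable, let C(H) be the family consisting of, for each of the h! labelings of V(H) by 1,…,h, the ordered core of the corresponding backedge graph, and let K be a maximal element of C(H) with respect to the order-preserving-homomorphism preorder (i.e., for every C ∈ C(H), if there is an order-preserving homomorphism from C to K then there is an order-preserving isomorphism between C and K). Then K contains a cycle c₁ c₂ … c_ℓ c₁ of length ℓ ≥ 3 with the following property: for every labeling of V(H) by 1,…,h with corresponding backedge graph G, and for every order-preserving homomorphism f : G → K, there exist vertices u₁ ∈ f⁻¹(c₁), …, u_ℓ ∈ f⁻¹(c_ℓ) such that u₁ u₂ … u_ℓ u₁ is a cycle in G. -/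
def IsOrientedGraph {V : Type*} (E : V → V → Prop) : Prop :=
  ∀ x y, E x y → x ≠ y ∧ ¬ E y x

/-- The backedge graph of an oriented graph `H` on `Fin h` with respect to the
labeling in which the vertex `σ i` receives the label `(i : ℕ) + 1 ∈ {1,…,h}`:
its vertex set is `{1,…,h}` and labels `x < y` are adjacent iff the `H`-edge between
the vertices labeled `x` and `y` points from the `y`-labeled one to the `x`-labeled
one. -/
def backedgeOG (h : ℕ) (EH : Fin h → Fin h → Prop) (σ : Fin h ≃ Fin h) :
    OrderedGraph where
  verts := Finset.image (fun i : Fin h => (i : ℕ) + 1) Finset.univ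
  Adj x y := ∃ i j : Fin h, x = (i : ℕ) + 1 ∧ y = (j : ℕ) + 1 ∧
    ((i < j ∧ EH (σ j) (σ i)) ∨ (j < i ∧ EH (σ i) (σ j)))

/-- The family `C(H)`: the ordered cores of the backedge graphs of `H` over all
labelings of `V(H)`. -/
def coreFamily (h : ℕ) (EH : Fin h → Fin h → Prop) : Set OrderedGraph :=
  {C | ∃ σ : Fin h ≃ Fin h, IsOrderedCoreOf C (backedgeOG h EH σ)}

def AcyclicOn {V : Type*} (E : V → V → Prop) (S : Set V) : Prop :=
  ∀ x, ¬ Relation.TransGen (fun a b => a ∈ S ∧ b ∈ S ∧ E a b) x x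

def KColorable {V : Type*} (E : V → V → Prop) (k : ℕ) : Prop :=
  ∃ c : V → Fin k, ∀ i : Fin k, AcyclicOn E {v | c v = i}

/-- `c 0, c 1, …, c (ℓ-1)` is a cycle of length `ℓ` in `G`: the vertices are
distinct, belong to `G`, and consecutive ones (cyclically) are adjacent. -/
def IsCycleIn (G : OrderedGraph) (ℓ : ℕ) (c : ℕ → ℕ) : Prop :=
  (∀ j < ℓ, c j ∈ G.verts) ∧
  (∀ j < ℓ, ∀ j' < ℓ, c j = c j' → j = j') ∧
  (∀ j < ℓ, G.Adj (c j) (c ((j + 1) % ℓ)))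

/-- A monotone map of a finite set of naturals onto itself fixes every point. -/
lemma eqOn_id_of_monotoneOn_of_image_eq (A : Finset ℕ) (t : ℕ → ℕ)
    (hmaps : ∀ x ∈ A, t x ∈ A)
    (hmono : ∀ x ∈ A, ∀ y ∈ A, x ≤ y → t x ≤ t y) (hcard : A.card ≤ (A.image t).card) :
    ∀ x ∈ A, t x = x := by
  have hinj : Set.InjOn t A :=
    Finset.card_image_iff.mp (le_antisymm Finset.card_image_le hcard)
  let T : A → A := fun x => ⟨t x, hmaps x x.2⟩
  have hT : StrictMono T := by
    intro x y hxy
    have hlt : (x : ℕ) < y := hxy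
    refine lt_of_le_of_ne (hmono x x.2 y y.2 hlt.le) ?_
    intro he
    exact hlt.ne (hinj x.2 y.2 (congrArg Subtype.val he))
  intro x hx
  have h1 : (⟨x, hx⟩ : A) ≤ T ⟨x, hx⟩ := hT.le_apply
  have h2 : T ⟨x, hx⟩ ≤ (⟨x, hx⟩ : A) := hT.apply_le
  exact congrArg Subtype.val (le_antisymm h2 h1)

lemma exists_orderedCore (G : OrderedGraph) : ∃ C, IsOrderedCoreOf C G := by
  have hG : IsSubgraph G G ∧ ∃ f, OPHom G G f :=
    ⟨⟨subset_rfl, fun _ _ h => h⟩, id, fun _ h => h, fun _ _ _ _ h => h, fun _ _ h => h⟩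
  let S : Set OrderedGraph := {C | IsSubgraph C G ∧ ∃ f, OPHom G C f}
  have hS : S.Nonempty := ⟨G, hG⟩
  obtain ⟨C, hC, hmin⟩ :=
    WellFounded.has_min (measure fun C : OrderedGraph => C.verts.card).wf S hS
  refine ⟨C, hC.1, hC.2, fun C' h1 h2 => ?_⟩
  exact not_lt.mp (hmin C' ⟨h1, h2⟩)

/-- If some subgraph `C` of `G` is isomorphic to the ordered core `K` (of an arbitrary `G₀`), then
every order-preserving homomorphism `f : G → K` has a section that preserves adjacency.
Adjacency is only controlled on `K.verts`, as `IsSubgraph` allows edges of `K` outside it. -/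
lemma exists_section {G₀ G C K : OrderedGraph} {f g : ℕ → ℕ}
    (hK : IsOrderedCoreOf K G₀)
    (hG₀ : ∀ x y, G₀.Adj x y → x ∈ G₀.verts ∧ y ∈ G₀.verts)
    (hC : IsSubgraph C G) (hf : OPHom G K f) (hg : OPIso C K g) :
    ∃ s : ℕ → ℕ, (∀ x ∈ K.verts, s x ∈ G.verts ∧ f (s x) = x) ∧
      ∀ x ∈ K.verts, ∀ y ∈ K.verts, K.Adj x y → G.Adj (s x) (s y) := by
  obtain ⟨hKG, ⟨q, hq⟩, hmin⟩ := hK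
  obtain ⟨hgh, hbij, hrefl⟩ := hg
  have hpre : ∀ x : ℕ, ∃ y, x ∈ K.verts → y ∈ C.verts ∧ g y = x := by
    intro x
    by_cases hx : x ∈ K.verts
    · obtain ⟨y, hy, e⟩ := hbij.surjOn hx
      exact ⟨y, fun _ => ⟨hy, e⟩⟩
    · exact ⟨0, fun h => absurd h hx⟩
  choose s hs using hpre
  have hadj : ∀ x ∈ K.verts, ∀ y ∈ K.verts, K.Adj x y → G.Adj (s x) (s y) := by
    intro x hx y hy hxy
    apply hC.2
    apply hrefl _ (hs x hx).1 _ (hs y hy).1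
    rwa [(hs x hx).2, (hs y hy).2]
  have hsG : ∀ x ∈ K.verts, s x ∈ G.verts := fun x hx => hC.1 (hs x hx).1
  have hmono : ∀ x ∈ K.verts, ∀ y ∈ K.verts, x ≤ y → f (s x) ≤ f (s y) := by
    intro x hx y hy hxy
    apply hf.2.1 _ (hsG x hx) _ (hsG y hy)
    by_contra! hlt
    have := hgh.2.1 _ (hs y hy).1 _ (hs x hx).1 hlt.le
    rw [(hs x hx).2, (hs y hy).2] at this
    have e : x = y := le_antisymm hxy this
    subst e
    exact lt_irrefl _ hlt
  have hmaps : ∀ x ∈ K.verts, f (s x) ∈ K.verts := fun x hx => hf.1 _ (hsG x hx)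
  -- `f ∘ s ∘ q` maps `G₀` into the subgraph of `K` on the image of `f ∘ s`, so minimality applies.
  have hcard : K.verts.card ≤ (K.verts.image (fun x => f (s x))).card := by
    refine hmin ⟨K.verts.image (fun x => f (s x)), K.Adj⟩ ⟨?_, hKG.2⟩
      ⟨fun x => f (s (q x)), ?_, ?_, ?_⟩
    · intro y hy
      obtain ⟨x, hx, rfl⟩ := Finset.mem_image.mp hy
      exact hKG.1 (hmaps x hx)
    · intro x hx
      exact Finset.mem_image.mpr ⟨q x, hq.1 x hx, rfl⟩
    · intro x hx y hy hxy
      exact hmono _ (hq.1 x hx) _ (hq.1 y hy) (hq.2.1 x hx y hy hxy)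
    · intro x y hxy
      obtain ⟨hx, hy⟩ := hG₀ x y hxy
      exact hf.2.2 _ _ (hadj _ (hq.1 x hx) _ (hq.1 y hy) (hq.2.2 x y hxy))
  have hid := eqOn_id_of_monotoneOn_of_image_eq K.verts (fun x => f (s x)) hmaps hmono hcard
  exact ⟨s, fun x hx => ⟨hsG x hx, hid x hx⟩, hadj⟩

lemma backedgeOG_isGraph (h : ℕ) (EH : Fin h → Fin h → Prop) (σ : Fin h ≃ Fin h) :
    (backedgeOG h EH σ).IsGraph := by
  refine ⟨?_, ?_, ?_⟩
  · rintro x y ⟨i, j, hx, hy, hij⟩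
    exact ⟨j, i, hy, hx, hij.symm⟩
  · rintro x ⟨i, j, hx, hy, hij⟩
    have e : i = j := Fin.ext (by omega)
    subst e
    simp at hij
  · rintro x y ⟨i, j, rfl, rfl, -⟩
    simp [backedgeOG]

/-- A coloring of the labels that is proper on a backedge graph of `H` colors `H` with acyclic
classes: inside a class all edges of `H` increase the label. -/
lemma kColorable_of_backedge_coloring {h k : ℕ} {EH : Fin h → Fin h → Prop}
    (hH : IsOrientedGraph EH) (σ : Fin h ≃ Fin h) (col : ℕ → Fin k)
    (hcol : ∀ x y, (backedgeOG h EH σ).Adj x y → col x ≠ col y) : KColorable EH k := by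
  refine ⟨fun v => col ((σ.symm v : ℕ) + 1), fun i v hv => ?_⟩
  have key : ∀ a b, Relation.TransGen
      (fun a b => a ∈ {v | col ((σ.symm v : ℕ) + 1) = i} ∧
        b ∈ {v | col ((σ.symm v : ℕ) + 1) = i} ∧ EH a b) a b → σ.symm a < σ.symm b := by
    have step : ∀ a b, col ((σ.symm a : ℕ) + 1) = i → col ((σ.symm b : ℕ) + 1) = i →
        EH a b → σ.symm a < σ.symm b := by
      intro a b ha hb hab
      by_contra! hle
      have hne : σ.symm b ≠ σ.symm a := fun e => (hH a b hab).1 (σ.symm.injective e).symm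
      refine hcol ((σ.symm a : ℕ) + 1) ((σ.symm b : ℕ) + 1) ?_ (ha.trans hb.symm)
      refine ⟨σ.symm a, σ.symm b, rfl, rfl, Or.inr ⟨lt_of_le_of_ne hle hne, ?_⟩⟩
      simpa using hab
    intro a b hab
    induction hab with
    | single h => exact step _ _ h.1 h.2.1 h.2.2
    | tail _ h ih => exact ih.trans (step _ _ h.1 h.2.1 h.2.2)
  exact lt_irrefl _ (key v v hv)

/-- If `H` is not 2-colorable, any loopless `K` receiving a homomorphism from a backedge graph
of `H` contains a cycle. -/
lemma exists_cycle {h : ℕ} {EH : Fin h → Fin h → Prop} (hH : IsOrientedGraph EH)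
    (hnc : ¬ KColorable EH 2) {σ : Fin h ≃ Fin h} {K : OrderedGraph} {q : ℕ → ℕ}
    (hq : OPHom (backedgeOG h EH σ) K q) (hK : ∀ x, ¬ K.Adj x x) :
    ∃ ℓ : ℕ, 3 ≤ ℓ ∧ ∃ cv : ℕ → ℕ, IsCycleIn K ℓ cv := by
  obtain ⟨hsymm, -, hsupp⟩ := backedgeOG_isGraph h EH σ
  -- `K.Adj` need not be symmetric or supported on `K.verts`; the image of the backedge graph is.
  let D : SimpleGraph ℕ :=
    { Adj := fun x y => ∃ a b, (backedgeOG h EH σ).Adj a b ∧ q a = x ∧ q b = y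
      symm := ⟨fun x y ⟨a, b, hab, ha, hb⟩ => ⟨b, a, hsymm a b hab, hb, ha⟩⟩
      loopless := ⟨fun x ⟨a, b, hab, ha, hb⟩ => by
        have := hq.2.2 a b hab
        rw [ha, hb] at this
        exact hK x this⟩ }
  have hDK : ∀ x y, D.Adj x y → K.Adj x y ∧ x ∈ K.verts := by
    rintro x y ⟨a, b, hab, rfl, rfl⟩
    exact ⟨hq.2.2 a b hab, hq.1 a (hsupp a b hab).1⟩
  have hD : ¬ D.IsAcyclic := by
    intro hac
    obtain ⟨c⟩ := hac.colorable_two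
    exact hnc (kColorable_of_backedge_coloring hH σ (fun x => c (q x))
      fun x y hxy => c.valid ⟨x, y, hxy, rfl, rfl⟩)
  simp only [SimpleGraph.IsAcyclic, not_forall, not_not] at hD
  obtain ⟨v, p, hp⟩ := hD
  have hlen := hp.three_le_length
  refine ⟨p.length, hlen, p.getVert, ?_, ?_, ?_⟩
  · intro j hj
    exact (hDK _ _ (p.adj_getVert_succ hj)).2
  · intro j hj j' hj' e
    exact hp.getVert_injOn' (show j ≤ p.length - 1 by omega) (show j' ≤ p.length - 1 by omega) e
  · intro j hj
    have hadj := (hDK _ _ (p.adj_getVert_succ hj)).1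
    rcases Nat.lt_or_ge (j + 1) p.length with h1 | h1
    · rwa [Nat.mod_eq_of_lt h1]
    · have e : j + 1 = p.length := by omega
      rw [e, p.getVert_length] at hadj
      rwa [e, Nat.mod_self, p.getVert_zero]

/-- Corollary `odd_cycle`. -/
theorem stmt15 (h : ℕ) (EH : Fin h → Fin h → Prop) (hH : IsOrientedGraph EH)
    (hnc : ¬ KColorable EH 2)
    (K : OrderedGraph) (hKmem : K ∈ coreFamily h EH)
    (hKmax : ∀ C ∈ coreFamily h EH, (∃ f, OPHom C K f) → ∃ g, OPIso C K g) :
    ∃ ℓ : ℕ, 3 ≤ ℓ ∧ ∃ cv : ℕ → ℕ, IsCycleIn K ℓ cv ∧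
      ∀ σ : Fin h ≃ Fin h, ∀ f : ℕ → ℕ, OPHom (backedgeOG h EH σ) K f →
        ∃ u : ℕ → ℕ, IsCycleIn (backedgeOG h EH σ) ℓ u ∧
          ∀ j < ℓ, f (u j) = cv j := by
  obtain ⟨σ₀, hK⟩ := hKmem
  obtain ⟨q, hq⟩ := hK.2.1
  have hloop : ∀ x, ¬ K.Adj x x :=
    fun x hx => (backedgeOG_isGraph h EH σ₀).2.1 x (hK.1.2 x x hx)
  obtain ⟨ℓ, hℓ, cv, hcv⟩ := exists_cycle hH hnc hq hloop
  refine ⟨ℓ, hℓ, cv, hcv, fun σ f hf => ?_⟩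
  obtain ⟨C, hC⟩ := exists_orderedCore (backedgeOG h EH σ)
  have hfC : OPHom C K f :=
    ⟨fun x hx => hf.1 x (hC.1.1 hx),
      fun x hx y hy => hf.2.1 x (hC.1.1 hx) y (hC.1.1 hy),
      fun x y hxy => hf.2.2 x y (hC.1.2 x y hxy)⟩
  obtain ⟨g, hg⟩ := hKmax C ⟨σ, hC⟩ ⟨f, hfC⟩
  obtain ⟨s, hs, hadj⟩ :=
    exists_section hK (backedgeOG_isGraph h EH σ₀).2.2 hC.1 hf hg
  obtain ⟨hv, hinj, hc⟩ := hcv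
  refine ⟨fun j => s (cv j), ⟨fun j hj => (hs _ (hv j hj)).1, fun j hj j' hj' e => ?_,
    fun j hj => ?_⟩, fun j hj => (hs _ (hv j hj)).2⟩
  · apply hinj j hj j' hj'
    have := congrArg f e
    simpa only [(hs _ (hv j hj)).2, (hs _ (hv j' hj')).2] using this
  · exact hadj _ (hv j hj) _ (hv _ (Nat.mod_lt _ (by omega))) (hc j hj)
end
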